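/- arXiv:1907.06761 — 2 statements merged into one kernel-verified Lean document; each statement's English description precedes it below -/
import Mathlib

section
/- Suppose n ≡ 2 (mod 4). Then the fixed subring A^G is generated as a ℂ-algebra by the orbit sums of degree n; that is, A^G equals the ℂ-subalgebra of A generated by the set {O(n−i, i) : 0 ≤ i ≤ n/2}. (In the notation of the paper, β(g) = n < |G| = 2n, so the invariants are generated in degree n.) -/
/-!
Setting: `lam n = exp(2πi/n)` is a primitive `n`-th root of unity in `ℂ`.
`SkewAlg` is the `(-1)`-skew polynomial ring `A = ℂ⟨u,v⟩/(uv+vu)`, with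
generators `uGen`, `vGen`.  The automorphism `g` (of order `2n`) is determined
by `g u = v`, `g v = lam n • u`, and generates the cyclic group `G`, so that
the fixed subring `A^G` is `{a | g a = a}`.  The orbit sum is
`orbitSum n a b = u^a v^b + (-1)^(a*b) * (lam n)^b • (u^b v^a)`.
-/

noncomputable section

/-- `lam n = exp(2πi/n)`, a primitive `n`-th root of unity. -/
def lam (n : ℕ) : ℂ := Complex.exp (2 * (Real.pi : ℂ) * Complex.I / (n : ℂ))

/-- The defining relation of the `(-1)`-skew polynomial ring: `uv + vu = 0`. -/
inductive SkewRel : FreeAlgebra ℂ (Fin 2) → FreeAlgebra ℂ (Fin 2) → Prop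
  | rel : SkewRel (FreeAlgebra.ι ℂ 0 * FreeAlgebra.ι ℂ 1 + FreeAlgebra.ι ℂ 1 * FreeAlgebra.ι ℂ 0) 0

/-- The skew polynomial ring `A = ℂ⟨u,v⟩/(uv+vu)`. -/
abbrev SkewAlg : Type := RingQuot SkewRel

/-- The generator `u` of `A`. -/
def uGen : SkewAlg := RingQuot.mkAlgHom ℂ SkewRel (FreeAlgebra.ι ℂ 0)

/-- The generator `v` of `A`. -/
def vGen : SkewAlg := RingQuot.mkAlgHom ℂ SkewRel (FreeAlgebra.ι ℂ 1)

/-- Orbit sum `O(a,b) = u^a v^b + (-1)^(ab) λ^b u^b v^a`. -/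
def orbitSum (n a b : ℕ) : SkewAlg :=
  uGen ^ a * vGen ^ b + ((-1 : ℂ) ^ (a * b) * lam n ^ b) • (uGen ^ b * vGen ^ a)

theorem aux_vu : vGen * uGen = (-1 : ℂ) • (uGen * vGen) := by
  have h := RingQuot.mkAlgHom_rel ℂ SkewRel.rel
  simp only [map_add, map_mul, map_zero] at h
  exact (eq_neg_of_add_eq_zero_right h).trans (neg_one_smul ℂ _).symm

theorem aux_v_upow (c : ℕ) : vGen * uGen ^ c = (-1 : ℂ) ^ c • (uGen ^ c * vGen) := by
  induction c with
  | zero => simp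
  | succ c ih =>
    rw [pow_succ, ← mul_assoc, ih, smul_mul_assoc, mul_assoc, aux_vu, mul_smul_comm, smul_smul, ← pow_succ,
      mul_assoc]

theorem aux_vpow_upow (b c : ℕ) :
    vGen ^ b * uGen ^ c = (-1 : ℂ) ^ (b * c) • (uGen ^ c * vGen ^ b) := by
  induction b with
  | zero => simp
  | succ b ih =>
    rw [pow_succ, mul_assoc, aux_v_upow, mul_smul_comm, ← mul_assoc, ih, smul_mul_assoc,
      smul_smul, ← pow_add, mul_assoc, add_mul, one_mul, add_comm c]

theorem aux_mono_mul (a b c d : ℕ) :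
    (uGen ^ a * vGen ^ b) * (uGen ^ c * vGen ^ d)
      = (-1 : ℂ) ^ (b * c) • (uGen ^ (a + c) * vGen ^ (b + d)) := by
  rw [mul_assoc, ← mul_assoc (vGen ^ b), aux_vpow_upow, smul_mul_assoc, mul_smul_comm,
    pow_add, pow_add]
  simp only [mul_assoc]

theorem aux_span : ∀ x : SkewAlg,
    x ∈ Submodule.span ℂ {y : SkewAlg | ∃ a b : ℕ, y = uGen ^ a * vGen ^ b} := by
  set M := Submodule.span ℂ {y : SkewAlg | ∃ a b : ℕ, y = uGen ^ a * vGen ^ b} with hM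
  have hu : ∀ y ∈ M, uGen * y ∈ M := by
    intro y hy
    induction hy using Submodule.span_induction with
    | mem y h =>
      obtain ⟨a, b, rfl⟩ := h
      exact Submodule.subset_span ⟨a + 1, b, by rw [pow_succ', mul_assoc]⟩
    | zero => simp
    | add x y _ _ hx hy => rw [mul_add]; exact M.add_mem hx hy
    | smul c x _ hx => rw [mul_smul_comm]; exact M.smul_mem _ hx
  have hv : ∀ y ∈ M, vGen * y ∈ M := by
    intro y hy
    induction hy using Submodule.span_induction with
    | mem y h =>
      obtain ⟨a, b, rfl⟩ := h
      rw [← mul_assoc, aux_v_upow, smul_mul_assoc, mul_assoc, ← pow_succ']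
      exact M.smul_mem _ (Submodule.subset_span ⟨a, b + 1, rfl⟩)
    | zero => simp
    | add x y _ _ hx hy => rw [mul_add]; exact M.add_mem hx hy
    | smul c x _ hx => rw [mul_smul_comm]; exact M.smul_mem _ hx
  have key : ∀ p : FreeAlgebra ℂ (Fin 2), ∀ y ∈ M, RingQuot.mkAlgHom ℂ SkewRel p * y ∈ M := by
    intro p
    induction p using FreeAlgebra.induction with
    | grade0 r =>
      intro y hy
      rw [AlgHom.commutes, ← Algebra.smul_def]
      exact M.smul_mem _ hy
    | grade1 i =>
      fin_cases i
      · exact hu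
      · exact hv
    | mul a b ha hb =>
      intro y hy
      rw [map_mul, mul_assoc]
      exact ha _ (hb _ hy)
    | add a b ha hb =>
      intro y hy
      rw [map_add, add_mul]
      exact M.add_mem (ha _ hy) (hb _ hy)
  intro x
  obtain ⟨p, rfl⟩ := RingQuot.mkAlgHom_surjective ℂ SkewRel x
  have := key p 1 (Submodule.subset_span ⟨0, 0, by simp⟩)
  simpa using this

theorem fixed_eq_adjoin_of_mod_four_eq_two (n : ℕ) (hn : n % 4 = 2)
    (g : SkewAlg ≃ₐ[ℂ] SkewAlg) (hgu : g uGen = vGen) (hgv : g vGen = lam n • uGen) :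
    {a : SkewAlg | g a = a} =
      ↑(Algebra.adjoin ℂ {x : SkewAlg | ∃ i : ℕ, i ≤ n / 2 ∧ x = orbitSum n (n - i) i}) := by
  set S := Algebra.adjoin ℂ {x : SkewAlg | ∃ i : ℕ, i ≤ n / 2 ∧ x = orbitSum n (n - i) i} with hS
  have hn0 : n ≠ 0 := by omega
  have hprim : IsPrimitiveRoot (lam n) n := Complex.isPrimitiveRoot_exp n hn0
  have hgm : ∀ a b : ℕ, g (uGen ^ a * vGen ^ b)
      = ((-1 : ℂ) ^ (a * b) * lam n ^ b) • (uGen ^ b * vGen ^ a) := by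
    intro a b
    rw [map_mul, map_pow, map_pow, hgu, hgv, smul_pow, mul_smul_comm, aux_vpow_upow, smul_smul,
      mul_comm (lam n ^ b)]
  have hggm : ∀ a b : ℕ, g (g (uGen ^ a * vGen ^ b))
      = (lam n ^ (a + b)) • (uGen ^ a * vGen ^ b) := by
    intro a b
    rw [hgm, map_smul, hgm, smul_smul]
    congr 1
    have : ((-1 : ℂ) ^ (a * b)) * (-1) ^ (b * a) = 1 := by
      rw [mul_comm b a, ← mul_pow]; simp
    linear_combination (lam n ^ (a + b)) * this
  have hO : ∀ a b : ℕ, orbitSum n a b = uGen ^ a * vGen ^ b + g (uGen ^ a * vGen ^ b) := by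
    intro a b
    rw [hgm]; rfl
  have hfix : ∀ a b : ℕ, n ∣ a + b → g (orbitSum n a b) = orbitSum n a b := by
    intro a b hab
    rw [hO, map_add, hggm, (hprim.pow_eq_one_iff_dvd _).2 hab, one_smul, add_comm]
  have hsub : ∀ x ∈ S, g x = x := by
    intro x hx
    induction hx using Algebra.adjoin_induction with
    | mem x h =>
      obtain ⟨i, hi, rfl⟩ := h
      exact hfix _ _ ⟨1, by omega⟩
    | algebraMap r => exact g.commutes r
    | add x y _ _ hx hy => rw [map_add, hx, hy]
    | mul x y _ _ hx hy => rw [map_mul, hx, hy]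
  -- symmetry
  have hsymm : ∀ a b : ℕ, n ∣ a + b → orbitSum n b a ∈ S → orbitSum n a b ∈ S := by
    intro a b hab h
    have h1 : orbitSum n a b = ((-1 : ℂ) ^ (a * b) * lam n ^ b) • orbitSum n b a := by
      have hw := hggm a b
      rw [(hprim.pow_eq_one_iff_dvd _).2 hab, one_smul, hgm a b, map_smul] at hw
      rw [hO b a, smul_add, hw, orbitSum, add_comm]
    rw [h1]
    exact S.smul_mem h _
  obtain ⟨m, hm, hmodd⟩ : ∃ m, n = 2 * m ∧ m % 2 = 1 := ⟨n / 2, by omega, by omega⟩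
  have hlm : lam n ^ m = -1 := by
    have h1 : (lam n ^ m) ^ 2 = 1 := by
      rw [← pow_mul, mul_comm m 2, ← hm]; exact hprim.pow_eq_one
    rcases (sq_eq_sq_iff_eq_or_eq_neg (b := (1 : ℂ))).1 (by rw [h1, one_pow]) with h | h
    · have := Nat.le_of_dvd (by omega) ((hprim.pow_eq_one_iff_dvd _).1 h)
      omega
    · exact h
  have hP : uGen ^ m * vGen ^ m ∈ S := by
    have h1 : orbitSum n m m ∈ S :=
      Algebra.subset_adjoin ⟨m, by omega, by rw [show n - m = m by omega]⟩
    have h2 : orbitSum n m m = (2 : ℂ) • (uGen ^ m * vGen ^ m) := by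
      have : (-1 : ℂ) ^ (m * m) = -1 :=
        Odd.neg_one_pow (Nat.odd_mul.2 ⟨Nat.odd_iff.2 hmodd, Nat.odd_iff.2 hmodd⟩)
      rw [orbitSum, hlm, this]
      norm_num [two_smul]
    have h3 : uGen ^ m * vGen ^ m = (2⁻¹ : ℂ) • orbitSum n m m := by
      rw [h2, smul_smul]; norm_num
    rw [h3]; exact S.smul_mem h1 _
  have hbig : ∀ a b : ℕ, orbitSum n a b ∈ S → orbitSum n (a + m) (b + m) ∈ S := by
    intro a b h
    have h1 : orbitSum n a b * (uGen ^ m * vGen ^ m)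
        = (-1 : ℂ) ^ (b * m) • orbitSum n (a + m) (b + m) := by
      rw [hO, hO, add_mul]
      conv_lhs => rw [← hsub _ hP]
      rw [← map_mul, hsub _ hP, aux_mono_mul, map_smul, smul_add]
    have h2 : orbitSum n (a + m) (b + m)
        = (-1 : ℂ) ^ (b * m) • (orbitSum n a b * (uGen ^ m * vGen ^ m)) := by
      rw [h1, smul_smul, ← mul_pow]; simp
    rw [h2]; exact S.smul_mem (S.mul_mem h hP) _
  have hneven : Even n := ⟨m, by omega⟩
  have hQ : orbitSum n n 0 ∈ S := Algebra.subset_adjoin ⟨0, by omega, by simp⟩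
  have hstep : ∀ a b : ℕ, orbitSum n a b * orbitSum n n 0
      = orbitSum n (a + n) b + orbitSum n a (b + n) := by
    intro a b
    have hq : orbitSum n n 0 = uGen ^ n * vGen ^ 0 + uGen ^ 0 * vGen ^ n := by
      simp [orbitSum]
    have hqf := hsub _ hQ
    have h0 : orbitSum n a b * orbitSum n n 0 = (uGen ^ a * vGen ^ b) * orbitSum n n 0
        + g ((uGen ^ a * vGen ^ b) * orbitSum n n 0) := by
      rw [map_mul, hqf, hO a b, add_mul]
    rw [h0, hq, mul_add, aux_mono_mul, aux_mono_mul, (hneven.mul_left b).neg_one_pow,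
      map_add, hO, hO]
    simp only [mul_zero, pow_zero, one_smul, add_zero]
    abel
  have hall : ∀ k a b : ℕ, a + b = k * n → orbitSum n a b ∈ S := by
    intro k
    induction k with
    | zero =>
      intro a b hab
      obtain ⟨rfl, rfl⟩ : a = 0 ∧ b = 0 := by omega
      have : orbitSum n 0 0 = 1 + 1 := by simp [orbitSum]
      rw [this]; exact S.add_mem S.one_mem S.one_mem
    | succ k ih =>
      intro a b hab
      have hab' : a + b = k * n + n := by rw [hab]; ring
      have hboth : ∀ a b : ℕ, a + b = k * n + n → m ≤ a → m ≤ b → orbitSum n a b ∈ S := by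
        intro a b hab ha hb
        have := hbig (a - m) (b - m) (ih _ _ (by omega))
        rwa [Nat.sub_add_cancel ha, Nat.sub_add_cancel hb] at this
      have hsmall : ∀ a b : ℕ, a + b = k * n + n → b < m → orbitSum n a b ∈ S := by
        intro a b hab hb
        rcases Nat.eq_zero_or_pos k with rfl | hk
        · exact Algebra.subset_adjoin ⟨b, by omega, by rw [show n - b = a by omega]⟩
        · have hkn : n ≤ k * n := Nat.le_mul_of_pos_left n hk
          have h1 := hstep (a - n) b
          rw [Nat.sub_add_cancel (by omega)] at h1
          have h2 := hboth (a - n) (b + n) (by omega) (by omega) (by omega)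
          have h3 := S.mul_mem (ih (a - n) b (by omega)) hQ
          rw [eq_sub_of_add_eq h1.symm]
          exact S.sub_mem h3 h2
      rcases lt_or_ge b m with hb | hb
      · exact hsmall a b hab' hb
      · rcases lt_or_ge a m with ha | ha
        · exact hsymm a b ⟨k + 1, by rw [hab, mul_comm]⟩ (hsmall b a (by omega) ha)
        · exact hboth a b hab' ha hb
  -- averaging
  let h : SkewAlg →ₗ[ℂ] SkewAlg := g.toLinearMap ∘ₗ g.toLinearMap
  let L : SkewAlg →ₗ[ℂ] SkewAlg := ∑ j ∈ Finset.range n, h ^ j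
  have hLm : ∀ a b : ℕ, L (uGen ^ a * vGen ^ b)
      = (∑ j ∈ Finset.range n, (lam n ^ (a + b)) ^ j) • (uGen ^ a * vGen ^ b) := by
    intro a b
    have h1 : ∀ j : ℕ, (h ^ j) (uGen ^ a * vGen ^ b)
        = ((lam n ^ (a + b)) ^ j) • (uGen ^ a * vGen ^ b) := by
      intro j
      induction j with
      | zero => simp
      | succ j ih =>
        rw [pow_succ', Module.End.mul_apply, ih, map_smul]
        change _ • g (g _) = _
        rw [hggm, smul_smul, pow_succ]
    simp only [L, LinearMap.sum_apply, h1, Finset.sum_smul]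
  have hT : ∀ x : SkewAlg, L x + g (L x) ∈ S := by
    intro x
    induction aux_span x using Submodule.span_induction with
    | mem y hy =>
      obtain ⟨a, b, rfl⟩ := hy
      rw [hLm]
      by_cases hd : n ∣ a + b
      · rw [map_smul, ← smul_add, ← hO]
        obtain ⟨k, hk⟩ := hd
        exact S.smul_mem (hall k a b (by rw [hk, mul_comm])) _
      · have hne : lam n ^ (a + b) ≠ 1 := fun h => hd ((hprim.pow_eq_one_iff_dvd _).1 h)
        have hz : (∑ j ∈ Finset.range n, (lam n ^ (a + b)) ^ j) = 0 := by
          have := geom_sum_mul (lam n ^ (a + b)) n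
          rw [← pow_mul, mul_comm (a + b) n, pow_mul, hprim.pow_eq_one, one_pow, sub_self] at this
          exact (mul_eq_zero.1 this).resolve_right (sub_ne_zero.2 hne)
        rw [hz, zero_smul, map_zero, add_zero]
        exact S.zero_mem
    | zero => simp
    | add x y _ _ hx hy =>
      have := S.add_mem hx hy
      rw [map_add, map_add]
      convert this using 1
      abel
    | smul c x _ hx =>
      rw [map_smul, map_smul, ← smul_add]
      exact S.smul_mem hx c
  ext x
  constructor
  · intro hx
    have hx : g x = x := hx
    have h1 : ∀ j : ℕ, (h ^ j) x = x := by
      intro j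
      induction j with
      | zero => simp
      | succ j ih =>
        rw [pow_succ', Module.End.mul_apply, ih]
        change g (g x) = x
        rw [hx, hx]
    have hL : L x = (n : ℂ) • x := by
      simp only [L, LinearMap.sum_apply, h1, Finset.sum_const, Finset.card_range]
      exact (Nat.cast_smul_eq_nsmul ℂ n x).symm
    have h2 := hT x
    rw [hL, map_smul, hx, ← add_smul] at h2
    have h3 := S.smul_mem h2 ((n : ℂ) + n)⁻¹
    have hnc : (n : ℂ) + n ≠ 0 := by
      have : (n : ℂ) ≠ 0 := Nat.cast_ne_zero.2 hn0
      rw [← two_mul]; exact mul_ne_zero two_ne_zero this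
    rw [smul_smul, inv_mul_cancel₀ hnc, one_smul] at h3
    exact h3
  · intro hx
    exact hsub x hx
end
end

section
/- Suppose n is odd. Then the fixed subring A^G is generated as a ℂ-algebra by the orbit sums of degrees n, 2n and 3n; that is, A^G equals the ℂ-subalgebra of A generated by the set {O(n−i, i) : 0 ≤ i ≤ (n−1)/2} ∪ {O(2n−i, i) : 0 ≤ i ≤ n} ∪ {O(3n−i, i) : 0 ≤ i ≤ (3n−1)/2}. (This is the upper bound β(g) ≤ 3n.) -/
/-!
Setting: `lam n = exp(2πi/n)` is a primitive `n`-th root of unity in `ℂ`.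
`SkewAlg` is the `(-1)`-skew polynomial ring `A = ℂ⟨u,v⟩/(uv+vu)`, with
generators `uGen`, `vGen`.  The automorphism `g` (of order `2n`) is determined
by `g u = v`, `g v = lam n • u`, and generates the cyclic group `G`, so that
the fixed subring `A^G` is `{a | g a = a}`.  The orbit sum is
`orbitSum n a b = u^a v^b + (-1)^(a*b) * (lam n)^b • (u^b v^a)`.
-/

noncomputable section

theorem vu_pow (b c : ℕ) :
    vGen ^ b * uGen ^ c = ((-1 : ℂ) ^ (b * c)) • (uGen ^ c * vGen ^ b) := by
  have h0 : uGen * vGen + vGen * uGen = 0 := by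
    have h := RingQuot.mkAlgHom_rel ℂ SkewRel.rel
    simpa [uGen, vGen] using h
  have h1 : vGen * uGen = (-1 : ℂ) • (uGen * vGen) := by
    have h3 : (-1 : ℂ) • (uGen * vGen) + uGen * vGen = 0 := by
      nth_rewrite 2 [← one_smul ℂ (uGen * vGen)]
      rw [← add_smul]
      simp
    calc vGen * uGen = ((-1 : ℂ) • (uGen * vGen) + uGen * vGen) + vGen * uGen := by
          rw [h3, zero_add]
      _ = (-1 : ℂ) • (uGen * vGen) := by rw [add_assoc, h0, add_zero]
  have h2 : ∀ c : ℕ, vGen * uGen ^ c = ((-1 : ℂ) ^ c) • (uGen ^ c * vGen) := by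
    intro c
    induction c with
    | zero => simp
    | succ c ih =>
      rw [pow_succ, ← mul_assoc, ih, smul_mul_assoc, mul_assoc, h1, mul_smul_comm, smul_smul,
        ← pow_succ, ← mul_assoc]
  induction b with
  | zero => simp
  | succ b ih =>
    rw [pow_succ, mul_assoc, h2, mul_smul_comm, ← mul_assoc, ih, smul_mul_assoc, smul_smul,
      mul_assoc, ← pow_add]
    congr 2
    ring

theorem mono_mul (a b c d : ℕ) :
    (uGen ^ a * vGen ^ b) * (uGen ^ c * vGen ^ d) =
      ((-1 : ℂ) ^ (b * c)) • (uGen ^ (a + c) * vGen ^ (b + d)) := by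
  rw [mul_assoc, ← mul_assoc (vGen ^ b), vu_pow, smul_mul_assoc, mul_smul_comm, pow_add, pow_add]
  simp only [mul_assoc]

theorem lam_pow (n : ℕ) (hn : n ≠ 0) : lam n ^ n = 1 :=
  (Complex.isPrimitiveRoot_exp n hn).pow_eq_one

theorem neg_one_sq_pow (k : ℕ) : ((-1 : ℂ) ^ k) ^ 2 = 1 := by
  rw [← pow_mul, mul_comm, pow_mul]; simp

theorem orbit_swap (n a b : ℕ) (hn : n ≠ 0) (h : n ∣ a + b) :
    orbitSum n b a = ((-1 : ℂ) ^ (a * b) * lam n ^ a) • orbitSum n a b := by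
  have hl : lam n ^ (a + b) = 1 := by
    obtain ⟨k, hk⟩ := h
    rw [hk, pow_mul, lam_pow n hn, one_pow]
  unfold orbitSum
  rw [smul_add, smul_smul, add_comm]
  congr 1
  · rw [mul_comm b a]
  · have : ((-1 : ℂ) ^ (a * b) * lam n ^ a) * ((-1 : ℂ) ^ (a * b) * lam n ^ b) = 1 := by
      calc _ = ((-1 : ℂ) ^ (a * b)) ^ 2 * lam n ^ (a + b) := by ring
        _ = 1 := by rw [neg_one_sq_pow, hl, one_mul]
    rw [this, one_smul]

theorem orbit_mul (n a b c d : ℕ) (hn : n ≠ 0) (h : n ∣ c + d) :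
    orbitSum n a b * orbitSum n c d =
      ((-1 : ℂ) ^ (b * c)) • orbitSum n (a + c) (b + d) +
      ((-1 : ℂ) ^ (c * d + b * d) * lam n ^ d) • orbitSum n (a + d) (b + c) := by
  have hl : lam n ^ (c + d) = 1 := by
    obtain ⟨k, hk⟩ := h
    rw [hk, pow_mul, lam_pow n hn, one_pow]
  have key1 : (-1 : ℂ) ^ (b * c) * ((-1 : ℂ) ^ ((a + c) * (b + d)) * lam n ^ (b + d)) =
      ((-1 : ℂ) ^ (a * b) * lam n ^ b) * ((-1 : ℂ) ^ (c * d) * lam n ^ d) *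
      (-1 : ℂ) ^ (a * d) := by
    have : (-1 : ℂ) ^ (b * c) * ((-1 : ℂ) ^ ((a + c) * (b + d)) * lam n ^ (b + d)) =
      ((-1 : ℂ) ^ (a * b) * lam n ^ b) * ((-1 : ℂ) ^ (c * d) * lam n ^ d) *
      (-1 : ℂ) ^ (a * d) * ((-1 : ℂ) ^ (b * c)) ^ 2 := by ring
    rw [this, neg_one_sq_pow, mul_one]
  have key2 : ((-1 : ℂ) ^ (c * d + b * d) * lam n ^ d) *
        ((-1 : ℂ) ^ ((a + d) * (b + c)) * lam n ^ (b + c)) =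
      ((-1 : ℂ) ^ (a * b) * lam n ^ b) * (-1 : ℂ) ^ (a * c) := by
    have : ((-1 : ℂ) ^ (c * d + b * d) * lam n ^ d) *
        ((-1 : ℂ) ^ ((a + d) * (b + c)) * lam n ^ (b + c)) =
      ((-1 : ℂ) ^ (a * b) * lam n ^ b) * (-1 : ℂ) ^ (a * c) * lam n ^ (c + d) *
        ((-1 : ℂ) ^ (c * d)) ^ 2 * ((-1 : ℂ) ^ (b * d)) ^ 2 := by ring
    rw [this, neg_one_sq_pow, neg_one_sq_pow, hl]
    ring
  have key3 : (-1 : ℂ) ^ (c * d + b * d) * lam n ^ d =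
      (-1 : ℂ) ^ (c * d) * lam n ^ d * (-1 : ℂ) ^ (b * d) := by ring
  have e : ∀ x y z w : ℕ, orbitSum n x y * orbitSum n z w =
      uGen ^ x * vGen ^ y * (uGen ^ z * vGen ^ w) +
      ((-1 : ℂ) ^ (z * w) * lam n ^ w) • (uGen ^ x * vGen ^ y * (uGen ^ w * vGen ^ z)) +
      (((-1 : ℂ) ^ (x * y) * lam n ^ y) • (uGen ^ y * vGen ^ x * (uGen ^ z * vGen ^ w)) +
      (((-1 : ℂ) ^ (x * y) * lam n ^ y) * ((-1 : ℂ) ^ (z * w) * lam n ^ w)) •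
        (uGen ^ y * vGen ^ x * (uGen ^ w * vGen ^ z))) := by
    intro x y z w
    simp only [orbitSum, mul_add, add_mul, smul_mul_assoc, mul_smul_comm, smul_add, smul_smul]
    rw [mul_comm ((-1 : ℂ) ^ (x * y) * lam n ^ y)]
    abel
  rw [e]
  simp only [mono_mul, smul_smul]
  simp only [orbitSum, smul_add, smul_smul]
  rw [key1, key2, key3]
  abel

theorem orbit_fixed (n a b : ℕ) (hn : n ≠ 0) (h : n ∣ a + b)
    (g : SkewAlg ≃ₐ[ℂ] SkewAlg) (hgu : g uGen = vGen) (hgv : g vGen = lam n • uGen) :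
    g (orbitSum n a b) = orbitSum n a b := by
  have hm : ∀ a b : ℕ, g (uGen ^ a * vGen ^ b) =
      ((-1 : ℂ) ^ (a * b) * lam n ^ b) • (uGen ^ b * vGen ^ a) := by
    intro a b
    rw [map_mul, map_pow, map_pow, hgu, hgv, smul_pow, mul_smul_comm, vu_pow, smul_smul, mul_comm]
  have hs := orbit_swap n b a hn (by rwa [add_comm])
  have : g (orbitSum n a b) = ((-1 : ℂ) ^ (a * b) * lam n ^ b) • orbitSum n b a := by
    simp only [orbitSum, map_add, map_smul, hm, smul_add]
  rw [this, hs, mul_comm b a]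

theorem orbit_mem (n : ℕ) (hodd : Odd n) (B : Subalgebra ℂ SkewAlg)
    (hB : ∀ k a b, 1 ≤ k → k ≤ 3 → a + b = k * n → orbitSum n a b ∈ B) :
    ∀ k a b : ℕ, a + b = k * n → orbitSum n a b ∈ B := by
  have hn : n ≠ 0 := by rintro rfl; simp at hodd
  have hneg : (-1 : ℂ) ^ n = -1 := hodd.neg_one_pow
  have hO1 : orbitSum n n 0 ∈ B := hB 1 n 0 le_rfl (by norm_num) (by ring)
  -- swapping
  have swap : ∀ a b, n ∣ a + b → orbitSum n a b ∈ B → orbitSum n b a ∈ B := by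
    intro a b h hm
    rw [orbit_swap n a b hn h]
    exact B.smul_mem hm _
  have hR : ∀ a b, orbitSum n a b * orbitSum n n 0 =
      ((-1 : ℂ) ^ b) • orbitSum n (a + n) b + orbitSum n a (b + n) := by
    intro a b
    rw [orbit_mul n a b n 0 hn (by simp), mul_comm b n, pow_mul, hneg]
    simp
  have hL : ∀ a b, n ∣ a + b → orbitSum n n 0 * orbitSum n a b =
      orbitSum n (a + n) b + ((-1 : ℂ) ^ a) • orbitSum n a (b + n) := by
    intro a b h
    have hl : lam n ^ (a + b) = 1 := by
      obtain ⟨k, hk⟩ := h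
      rw [hk, pow_mul, lam_pow n hn, one_pow]
    have h' : n ∣ a + (b + n) := by rw [← add_assoc]; exact dvd_add h dvd_rfl
    rw [orbit_mul n n 0 a b hn h, zero_add, zero_add, add_comm n b, add_comm n a,
      orbit_swap n a (b + n) hn h', smul_smul]
    have : (-1 : ℂ) ^ (a * b + 0 * b) * lam n ^ b * ((-1 : ℂ) ^ (a * (b + n)) * lam n ^ a) =
        ((-1 : ℂ) ^ (a * b)) ^ 2 * ((-1 : ℂ) ^ n) ^ a * lam n ^ (a + b) := by ring
    rw [this, neg_one_sq_pow, hneg, hl]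
    simp
  intro k
  induction k using Nat.strong_induction_on with
  | _ k ih =>
  have down : ∀ a b, a + n + b = k * n → orbitSum n a (b + n) ∈ B → orbitSum n (a + n) b ∈ B := by
    intro a b hab hm
    have hk : 1 ≤ k := by
      rcases Nat.eq_zero_or_pos k with rfl | h
      · simp at hab; omega
      · exact h
    have hab' : a + b = (k - 1) * n := by
      obtain ⟨j, rfl⟩ := Nat.exists_eq_add_of_le' hk
      simp only [Nat.add_sub_cancel]
      linarith
    have h1 := B.mul_mem (ih (k - 1) (by omega) a b hab') hO1
    rw [hR] at h1
    have h2 := (Submodule.add_mem_iff_left (Subalgebra.toSubmodule B) hm).1 h1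
    have h3 := B.smul_mem h2 ((-1 : ℂ) ^ b)
    rwa [smul_smul, ← pow_two, neg_one_sq_pow, one_smul] at h3
  rcases Nat.lt_or_ge k 1 with h0 | h1
  · intro a b hab
    obtain rfl : k = 0 := by omega
    obtain ⟨rfl, rfl⟩ : a = 0 ∧ b = 0 := by omega
    simp only [orbitSum, pow_zero, mul_one, one_smul]
    exact B.add_mem B.one_mem (B.smul_mem B.one_mem _)
  rcases Nat.lt_or_ge 3 k with h3 | h3
  swap
  · intro a b hab
    exact hB k a b h1 h3 hab
  have hdvd : ∀ a b, a + b = k * n → n ∣ a + b := fun a b h => ⟨k, by rw [h, mul_comm]⟩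
  rcases Nat.lt_or_ge 4 k with h5 | h4
  · have hO4 : orbitSum n (2 * n) (2 * n) ∈ B := ih 4 h5 _ _ (by ring)
    -- centre
    have centre : ∀ a b, 2 * n ≤ a → 2 * n ≤ b → a + b = k * n → orbitSum n a b ∈ B := by
      intro a b ha hb hab
      obtain ⟨a, rfl⟩ := Nat.exists_eq_add_of_le' ha
      obtain ⟨b, rfl⟩ := Nat.exists_eq_add_of_le' hb
      obtain ⟨j, rfl⟩ := Nat.exists_eq_add_of_le' h5
      have hab' : a + b = (j + 1) * n := by linarith
      have h6 := B.mul_mem (ih (j + 1) (by omega) a b hab') hO4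
      have hl : lam n ^ (2 * n) = 1 := by rw [mul_comm, pow_mul, lam_pow n hn, one_pow]
      have e1 : (-1 : ℂ) ^ (b * (2 * n)) = 1 := by
        rw [show b * (2 * n) = 2 * (b * n) by ring, pow_mul]; simp
      have e2 : (-1 : ℂ) ^ (2 * n * (2 * n)) = 1 := by
        rw [show 2 * n * (2 * n) = 2 * (n * (2 * n)) by ring, pow_mul]; simp
      rw [orbit_mul n a b _ _ hn ⟨4, by ring⟩, hl, pow_add, e1, e2, mul_one, mul_one, one_smul,
        ← two_smul ℂ] at h6
      have h7 := B.smul_mem h6 (1 / 2 : ℂ)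
      rw [smul_smul] at h7
      norm_num at h7
      exact h7
    have main : ∀ m a b, 2 * n ≤ b + m → b ≤ a → a + b = k * n → orbitSum n a b ∈ B := by
      intro m
      induction m using Nat.strong_induction_on with
      | _ m ihm =>
      intro a b hm hba hab
      have hk : 5 * n ≤ k * n := Nat.mul_le_mul_right n h5
      by_cases hb : 2 * n ≤ b
      · exact centre a b (by omega) hb hab
      · obtain ⟨a, rfl⟩ := Nat.exists_eq_add_of_le' (show n ≤ a by omega)
        apply down a b (by omega)
        by_cases hb2 : 2 * n ≤ b + n
        · exact centre a (b + n) (by omega) hb2 (by omega)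
        · exact ihm (m - n) (by omega) a (b + n) (by omega) (by omega) (by omega)
    intro a b hab
    rcases le_total b a with h | h
    · exact main (2 * n) a b (by omega) h hab
    · exact swap b a (hdvd b a (by omega)) (main (2 * n) b a (by omega) h (by omega))
  · obtain rfl : k = 4 := by omega
    have main : ∀ a b, a + n + b = 4 * n → orbitSum n (a + n) b ∈ B := by
      intro a b hab
      have hab' : a + b = 3 * n := by omega
      have hm := ih 3 (by omega) a b hab'
      have h6 := B.smul_mem (B.mul_mem hm hO1) ((-1 : ℂ) ^ b)
      have h7 := B.mul_mem hO1 hm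
      have hs : (-1 : ℂ) ^ a = - (-1 : ℂ) ^ b := by
        have : (-1 : ℂ) ^ a * (-1 : ℂ) ^ b = -1 := by
          rw [← pow_add, hab', mul_comm, pow_mul, hneg]; norm_num
        calc (-1 : ℂ) ^ a = (-1 : ℂ) ^ a * ((-1 : ℂ) ^ b) ^ 2 := by rw [neg_one_sq_pow, mul_one]
          _ = ((-1 : ℂ) ^ a * (-1 : ℂ) ^ b) * (-1 : ℂ) ^ b := by ring
          _ = _ := by rw [this]; ring
      have h8 := B.smul_mem (B.add_mem h6 h7) (1 / 2 : ℂ)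
      have e : (1 / 2 : ℂ) • (((-1 : ℂ) ^ b) • (orbitSum n a b * orbitSum n n 0) +
          orbitSum n n 0 * orbitSum n a b) = orbitSum n (a + n) b := by
        rw [hR, hL a b ⟨3, by rw [hab', mul_comm]⟩, hs]
        have hq := neg_one_sq_pow b
        generalize (-1 : ℂ) ^ b = c at hq
        generalize orbitSum n (a + n) b = X
        generalize orbitSum n a (b + n) = Y
        have e1 : (1 / 2 : ℂ) • (c • (c • X + Y) + (X + (-c) • Y)) =
            ((1 / 2 : ℂ) * (c ^ 2 + 1)) • X := by module
        rw [e1, hq]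
        norm_num
      rwa [e] at h8
    intro a b hab
    rcases le_total b a with h | h
    · obtain ⟨a, rfl⟩ := Nat.exists_eq_add_of_le' (show n ≤ a by omega)
      exact main a b hab
    · apply swap b a (hdvd b a (by omega))
      obtain ⟨b, rfl⟩ := Nat.exists_eq_add_of_le' (show n ≤ b by omega)
      exact main b a (by omega)

theorem mono_span (x : SkewAlg) :
    x ∈ Submodule.span ℂ (Set.range fun p : ℕ × ℕ => uGen ^ p.1 * vGen ^ p.2) := by
  set S := Submodule.span ℂ (Set.range fun p : ℕ × ℕ => uGen ^ p.1 * vGen ^ p.2) with hS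
  have hmem : ∀ a b : ℕ, uGen ^ a * vGen ^ b ∈ S := fun a b => Submodule.subset_span ⟨(a, b), rfl⟩
  have key : ∀ y : FreeAlgebra ℂ (Fin 2), ∀ s ∈ S, RingQuot.mkAlgHom ℂ SkewRel y * s ∈ S := by
    intro y
    induction y using FreeAlgebra.induction with
    | grade0 r =>
      intro s hs
      rw [AlgHom.commutes, ← Algebra.smul_def]
      exact S.smul_mem _ hs
    | grade1 i =>
      intro s hs
      induction hs using Submodule.span_induction with
      | mem z hz =>
        obtain ⟨⟨a, b⟩, rfl⟩ := hz
        fin_cases i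
        · have h := mono_mul 1 0 a b
          have h' := S.smul_mem ((-1 : ℂ) ^ (0 * a)) (hmem (1 + a) (0 + b))
          rw [← h, pow_one, pow_zero, mul_one] at h'
          exact h'
        · have h := mono_mul 0 1 a b
          have h' := S.smul_mem ((-1 : ℂ) ^ (1 * a)) (hmem (0 + a) (1 + b))
          rw [← h, pow_one, pow_zero, one_mul] at h'
          exact h'
      | zero => rw [mul_zero]; exact S.zero_mem
      | add z w _ _ hz hw => rw [mul_add]; exact S.add_mem hz hw
      | smul r z _ hz => rw [mul_smul_comm]; exact S.smul_mem _ hz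
    | mul y z hy hz =>
      intro s hs
      rw [map_mul, mul_assoc]
      exact hy _ (hz _ hs)
    | add y z hy hz =>
      intro s hs
      rw [map_add, add_mul]
      exact S.add_mem (hy _ hs) (hz _ hs)
  obtain ⟨y, rfl⟩ := RingQuot.mkAlgHom_surjective ℂ SkewRel x
  have := key y 1 (by simpa using hmem 0 0)
  rwa [mul_one] at this

theorem fixed_mem (n : ℕ) (hn : n ≠ 0) (B : Subalgebra ℂ SkewAlg)
    (hB : ∀ k a b : ℕ, a + b = k * n → orbitSum n a b ∈ B)
    (g : SkewAlg ≃ₐ[ℂ] SkewAlg) (hgu : g uGen = vGen) (hgv : g vGen = lam n • uGen)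
    (x : SkewAlg) (hx : g x = x) : x ∈ B := by
  have hm : ∀ a b : ℕ, g (uGen ^ a * vGen ^ b) =
      ((-1 : ℂ) ^ (a * b) * lam n ^ b) • (uGen ^ b * vGen ^ a) := by
    intro a b
    rw [map_mul, map_pow, map_pow, hgu, hgv, smul_pow, mul_smul_comm, vu_pow, smul_smul, mul_comm]
  let f : SkewAlg →ₗ[ℂ] SkewAlg := g.toLinearMap
  have hf : ∀ y, f y = g y := fun y => rfl
  let T : SkewAlg →ₗ[ℂ] SkewAlg := (LinearMap.id + f) ∘ₗ ∑ i ∈ Finset.range n, (f ^ 2) ^ i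
  have hT : T x = (2 * n : ℂ) • x := by
    have h1 : ∀ i : ℕ, (f ^ i) x = x := by
      intro i
      induction i with
      | zero => rfl
      | succ i ih => rw [pow_succ, Module.End.mul_apply, hf, hx, ih]
    have h2 : (∑ i ∈ Finset.range n, (f ^ 2) ^ i) x = (n : ℂ) • x := by
      simp only [LinearMap.sum_apply, ← pow_mul, h1, Finset.sum_const, Finset.card_range]
      rw [Nat.cast_smul_eq_nsmul]
    simp only [T, LinearMap.comp_apply, h2, LinearMap.add_apply, LinearMap.id_apply, map_smul, hf,
      hx]
    module
  have hTB : ∀ y, T y ∈ B := by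
    intro y
    induction mono_span y using Submodule.span_induction with
    | mem z hz =>
      obtain ⟨⟨a, b⟩, rfl⟩ := hz
      have h2 : (f ^ 2) (uGen ^ a * vGen ^ b) = lam n ^ (a + b) • (uGen ^ a * vGen ^ b) := by
        rw [pow_two, Module.End.mul_apply, hf, hf, hm, map_smul, hm, smul_smul]
        congr 1
        calc _ = ((-1 : ℂ) ^ (a * b)) ^ 2 * lam n ^ (a + b) := by ring
          _ = _ := by rw [neg_one_sq_pow, one_mul]
      have h3 : ∀ i : ℕ, ((f ^ 2) ^ i) (uGen ^ a * vGen ^ b) =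
          (lam n ^ (a + b)) ^ i • (uGen ^ a * vGen ^ b) := by
        intro i
        induction i with
        | zero => simp
        | succ i ih =>
          rw [pow_succ, Module.End.mul_apply, h2, map_smul, ih, smul_smul, pow_succ, mul_comm]
      have h4 : T (uGen ^ a * vGen ^ b) =
          (∑ i ∈ Finset.range n, (lam n ^ (a + b)) ^ i) • orbitSum n a b := by
        simp only [T, LinearMap.comp_apply, LinearMap.sum_apply, h3, ← Finset.sum_smul, map_smul,
          LinearMap.add_apply, LinearMap.id_apply, hf, hm]
        rfl
      show T (uGen ^ a * vGen ^ b) ∈ B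
      rw [h4]
      by_cases hd : n ∣ a + b
      · obtain ⟨k, hk⟩ := hd
        exact B.smul_mem (hB k a b (by rw [hk, mul_comm])) _
      · have hne : lam n ^ (a + b) ≠ 1 := fun h =>
          hd (((Complex.isPrimitiveRoot_exp n hn).pow_eq_one_iff_dvd _).1 h)
        have : ∑ i ∈ Finset.range n, (lam n ^ (a + b)) ^ i = 0 := by
          rw [geom_sum_eq hne, ← pow_mul, mul_comm, pow_mul, lam_pow n hn]
          simp
        rw [this, zero_smul]
        exact B.zero_mem
    | zero => rw [map_zero]; exact B.zero_mem
    | add z w _ _ hz hw => rw [map_add]; exact B.add_mem hz hw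
    | smul r z _ hz => rw [map_smul]; exact B.smul_mem hz _
  have h := B.smul_mem (hTB x) ((2 * n : ℂ)⁻¹)
  have hne : (2 * n : ℂ) ≠ 0 := by
    have : (n : ℂ) ≠ 0 := by exact_mod_cast hn
    simp [this]
  rwa [hT, smul_smul, inv_mul_cancel₀ hne, one_smul] at h

/-- If `n` is odd then the fixed subring `A^G` is generated as a `ℂ`-algebra by
the orbit sums of degrees `n`, `2n` and `3n`. -/
theorem fixed_eq_adjoin_of_odd (n : ℕ) (hodd : Odd n)
    (g : SkewAlg ≃ₐ[ℂ] SkewAlg) (hgu : g uGen = vGen) (hgv : g vGen = lam n • uGen) :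
    {a : SkewAlg | g a = a} =
      ↑(Algebra.adjoin ℂ
        ({x : SkewAlg | ∃ i : ℕ, i ≤ (n - 1) / 2 ∧ x = orbitSum n (n - i) i} ∪
         {x : SkewAlg | ∃ i : ℕ, i ≤ n ∧ x = orbitSum n (2 * n - i) i} ∪
         {x : SkewAlg | ∃ i : ℕ, i ≤ (3 * n - 1) / 2 ∧ x = orbitSum n (3 * n - i) i})) := by
  have hn : n ≠ 0 := by rintro rfl; simp at hodd
  obtain ⟨t, ht⟩ := hodd
  have hodd : Odd n := ⟨t, ht⟩
  apply Set.Subset.antisymm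
  · intro x hx
    refine fixed_mem n hn _ (orbit_mem n hodd _ ?_) g hgu hgv x hx
    have base : ∀ k a b, 1 ≤ k → k ≤ 3 → b ≤ a → a + b = k * n →
        orbitSum n a b ∈ Algebra.adjoin ℂ
        ({x : SkewAlg | ∃ i : ℕ, i ≤ (n - 1) / 2 ∧ x = orbitSum n (n - i) i} ∪
         {x : SkewAlg | ∃ i : ℕ, i ≤ n ∧ x = orbitSum n (2 * n - i) i} ∪
         {x : SkewAlg | ∃ i : ℕ, i ≤ (3 * n - 1) / 2 ∧ x = orbitSum n (3 * n - i) i}) := by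
      intro k a b h1 h3 hba hab
      apply Algebra.subset_adjoin
      interval_cases k
      · exact Or.inl (Or.inl ⟨b, by omega, by congr 1; omega⟩)
      · exact Or.inl (Or.inr ⟨b, by omega, by congr 1; omega⟩)
      · exact Or.inr ⟨b, by omega, by congr 1; omega⟩
    intro k a b h1 h3 hab
    rcases le_total b a with h | h
    · exact base k a b h1 h3 h hab
    · rw [orbit_swap n b a hn ⟨k, by rw [add_comm, hab, mul_comm]⟩]
      exact Subalgebra.smul_mem _ (base k b a h1 h3 h (by omega)) _
  · have hle : Algebra.adjoin ℂ
        ({x : SkewAlg | ∃ i : ℕ, i ≤ (n - 1) / 2 ∧ x = orbitSum n (n - i) i} ∪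
         {x : SkewAlg | ∃ i : ℕ, i ≤ n ∧ x = orbitSum n (2 * n - i) i} ∪
         {x : SkewAlg | ∃ i : ℕ, i ≤ (3 * n - 1) / 2 ∧ x = orbitSum n (3 * n - i) i}) ≤
        AlgHom.equalizer (g : SkewAlg →ₐ[ℂ] SkewAlg) (AlgHom.id ℂ SkewAlg) := by
      apply Algebra.adjoin_le
      rintro x ((⟨i, hi, rfl⟩ | ⟨i, hi, rfl⟩) | ⟨i, hi, rfl⟩)
      · exact orbit_fixed n _ _ hn ⟨1, by omega⟩ g hgu hgv
      · exact orbit_fixed n _ _ hn ⟨2, by omega⟩ g hgu hgv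
      · exact orbit_fixed n _ _ hn ⟨3, by omega⟩ g hgu hgv
    intro x hx
    exact hle hx
end
end
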